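/- For all constants a, η, φ > 0 and every horizon T > 0, the trader Riccati terminal-value problem γ'(t) = (φ − a²/η) + (2a/η)·γ(t) − (1/(2η))·γ(t)² for t ∈ [0,T], with γ(T) = 0, has a unique C¹ solution γ on [0,T]. Moreover this solution is real-analytic on [0,T] and satisfies, for every t ∈ [0,T]: γ(t) < 2a and |γ(t) − 2a| ≤ 2·max(a, √(ηφ)); in addition γ(t) ≤ 0 for all t if ηφ ≥ a², and γ(t) ≥ 0 for all t if ηφ ≤ a². -/

import Mathlib

open Set

/-- The trader Riccati terminal-value problem: a function `γ` is a C¹ solution on `[0,T]` of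
`γ'(t) = (φ − a²/η) + (2a/η)·γ(t) − (1/(2η))·γ(t)²` with terminal condition `γ(T) = 0`. -/
def IsTraderRiccatiSol (a η φ T : ℝ) (γ : ℝ → ℝ) : Prop :=
  ContDiffOn ℝ 1 γ (Icc 0 T) ∧ γ T = 0 ∧
    ∀ t ∈ Icc (0 : ℝ) T,
      HasDerivWithinAt γ ((φ - a ^ 2 / η) + (2 * a / η) * γ t - (1 / (2 * η)) * (γ t) ^ 2)
        (Icc 0 T) t

lemma ric_unique (a η φ T : ℝ) (hη : 0 < η) (γ₁ γ₂ : ℝ → ℝ)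
    (h1 : IsTraderRiccatiSol a η φ T γ₁) (h2 : IsTraderRiccatiSol a η φ T γ₂) :
    ∀ t ∈ Icc (0 : ℝ) T, γ₁ t = γ₂ t := by
  obtain ⟨c1, e1, d1⟩ := h1
  obtain ⟨c2, e2, d2⟩ := h2
  have c1 := c1.continuousOn
  have c2 := c2.continuousOn
  obtain ⟨B1, hB1⟩ := isCompact_Icc.exists_bound_of_continuousOn c1
  obtain ⟨B2, hB2⟩ := isCompact_Icc.exists_bound_of_continuousOn c2
  set B := max B1 B2 with hB
  have m1 : ∀ t ∈ Icc (0:ℝ) T, |γ₁ t| ≤ B := fun t ht => (hB1 t ht).trans (le_max_left _ _)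
  have m2 : ∀ t ∈ Icc (0:ℝ) T, |γ₂ t| ≤ B := fun t ht => (hB2 t ht).trans (le_max_right _ _)
  let v : ℝ → ℝ → ℝ := fun _ y => (φ - a ^ 2 / η) + (2 * a / η) * y - (1 / (2 * η)) * y ^ 2
  have hv : ∀ t ∈ Ioc (0:ℝ) T,
      LipschitzOnWith (Real.toNNReal (|2 * a / η| + |1 / (2 * η)| * (2 * B))) (v t)
        {y : ℝ | |y| ≤ B} := by
    intro t ht
    apply LipschitzOnWith.of_dist_le_mul
    intro x hx y hy
    simp only [mem_ofPred_eq] at hx hy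
    have hBn : 0 ≤ B := (abs_nonneg x).trans hx
    rw [Real.coe_toNNReal _ (by positivity), Real.dist_eq, Real.dist_eq]
    have : v t x - v t y = (2 * a / η - 1 / (2 * η) * (x + y)) * (x - y) := by
      simp only [v]; ring
    rw [this, abs_mul]
    refine mul_le_mul_of_nonneg_right ?_ (abs_nonneg _)
    refine (abs_sub _ _).trans ?_
    rw [abs_mul]
    have := abs_add_le x y
    gcongr
    linarith
  have key := ODE_solution_unique_of_mem_Icc_left (v := v) (s := fun _ => {y : ℝ | |y| ≤ B})
    hv c1 ?_ (fun t ht => m1 t (Ioc_subset_Icc_self ht)) c2 ?_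
    (fun t ht => m2 t (Ioc_subset_Icc_self ht)) (e1.trans e2.symm)
  · exact key
  · intro t ht
    refine (d1 t (Ioc_subset_Icc_self ht)).mono_of_mem_nhdsWithin ?_
    exact Icc_mem_nhdsLE_of_mem ht
  · intro t ht
    refine (d2 t (Ioc_subset_Icc_self ht)).mono_of_mem_nhdsWithin ?_
    exact Icc_mem_nhdsLE_of_mem ht

theorem riccati_trader_existence_uniqueness_and_bounds
    (a η φ T : ℝ) (ha : 0 < a) (hη : 0 < η) (hφ : 0 < φ) (hT : 0 < T) :
    (∃ γ : ℝ → ℝ, IsTraderRiccatiSol a η φ T γ) ∧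
    (∀ γ₁ γ₂ : ℝ → ℝ, IsTraderRiccatiSol a η φ T γ₁ → IsTraderRiccatiSol a η φ T γ₂ →
      ∀ t ∈ Icc (0 : ℝ) T, γ₁ t = γ₂ t) ∧
    (∀ γ : ℝ → ℝ, IsTraderRiccatiSol a η φ T γ →
      AnalyticOn ℝ γ (Icc 0 T) ∧
      (∀ t ∈ Icc (0 : ℝ) T,
        γ t < 2 * a ∧ |γ t - 2 * a| ≤ 2 * max a (Real.sqrt (η * φ))) ∧
      (a ^ 2 ≤ η * φ → ∀ t ∈ Icc (0 : ℝ) T, γ t ≤ 0) ∧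
      (η * φ ≤ a ^ 2 → ∀ t ∈ Icc (0 : ℝ) T, 0 ≤ γ t)) := by
  obtain ⟨R, hR, hR2⟩ : ∃ R : ℝ, 0 < R ∧ R ^ 2 = 2 * (η * φ) + 2 * a ^ 2 :=
    ⟨Real.sqrt (2 * (η * φ) + 2 * a ^ 2), Real.sqrt_pos.2 (by positivity),
      Real.sq_sqrt (by positivity)⟩
  let k := R / (2 * η)
  have hk : 0 < k := by positivity
  let N : ℝ → ℝ := fun t => 2 * a * Real.cosh (k * (T - t)) + R * Real.sinh (k * (T - t))
  let D : ℝ → ℝ := fun t => R * Real.cosh (k * (T - t)) + 2 * a * Real.sinh (k * (T - t))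
  let g : ℝ → ℝ := fun t => 2 * a - R * N t / D t
  have hs : ∀ t ∈ Icc (0:ℝ) T, 0 ≤ Real.sinh (k * (T - t)) := fun t ht =>
    Real.sinh_nonneg_iff.2 (mul_nonneg hk.le (by linarith [ht.2]))
  have hc : ∀ t, 0 < Real.cosh (k * (T - t)) := fun t => Real.cosh_pos _
  have hD : ∀ t ∈ Icc (0:ℝ) T, 0 < D t := fun t ht => by
    have := hs t ht
    have := hc t
    simp only [D]; positivity
  have hN : ∀ t ∈ Icc (0:ℝ) T, 0 < N t := fun t ht => by
    have := hs t ht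
    have := hc t
    simp only [N]; positivity
  have hlin : ∀ t, HasDerivAt (fun t => k * (T - t)) (-k) t := fun t => by
    simpa using ((hasDerivAt_id t).const_sub T).const_mul k
  have hN' : ∀ t, HasDerivAt N (-k * D t) t := fun t => by
    have := ((hlin t).cosh.const_mul (2 * a)).add ((hlin t).sinh.const_mul R)
    refine this.congr_deriv ?_
    simp only [D]; ring
  have hD' : ∀ t, HasDerivAt D (-k * N t) t := fun t => by
    have := ((hlin t).cosh.const_mul R).add ((hlin t).sinh.const_mul (2 * a))
    refine this.congr_deriv ?_
    simp only [N]; ring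
  have hg' : ∀ t ∈ Icc (0:ℝ) T, HasDerivAt g
      ((φ - a ^ 2 / η) + (2 * a / η) * g t - (1 / (2 * η)) * (g t) ^ 2) t := fun t ht => by
    have hd := hD t ht
    have := (((hN' t).const_mul R).div (hD' t) hd.ne').const_sub (2 * a)
    refine this.congr_deriv ?_
    have e : φ = (R ^ 2 - 2 * a ^ 2) / (2 * η) := by
      rw [hR2]; field_simp; ring
    rw [e]
    simp only [g, k]
    generalize D t = d at *
    generalize N t = n at *
    field_simp
    ring
  have hNa : ∀ t, AnalyticAt ℝ N t := fun t => by
    simp only [N, Real.cosh_eq, Real.sinh_eq]; fun_prop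
  have hDa : ∀ t, AnalyticAt ℝ D t := fun t => by
    simp only [D, Real.cosh_eq, Real.sinh_eq]; fun_prop
  have hga : AnalyticOn ℝ g (Icc 0 T) := fun t ht =>
    (analyticAt_const.sub ((analyticAt_const.mul (hNa t)).div (hDa t)
      (hD t ht).ne')).analyticWithinAt
  have hsol : IsTraderRiccatiSol a η φ T g := by
    refine ⟨hga.contDiffOn (uniqueDiffOn_Icc hT), ?_, fun t ht => (hg' t ht).hasDerivWithinAt⟩
    simp only [g, N, D]
    simp
    field_simp
    ring
  refine ⟨⟨g, hsol⟩, fun γ₁ γ₂ => ric_unique a η φ T hη γ₁ γ₂, fun γ hγ => ?_⟩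
  have heq := ric_unique a η φ T hη γ g hγ hsol
  have hdiff : ∀ t ∈ Icc (0:ℝ) T,
      g t = (4 * a ^ 2 - R ^ 2) * Real.sinh (k * (T - t)) / D t := fun t ht => by
    have hd := hD t ht
    simp only [g]
    rw [eq_div_iff hd.ne', sub_mul, div_mul_cancel₀ _ hd.ne']
    simp only [N, D]; ring
  refine ⟨hga.congr heq, fun t ht => ?_, fun h t ht => ?_, fun h t ht => ?_⟩
  · rw [heq t ht]
    have hd := hD t ht
    have hn := hN t ht
    have hp : 0 < R * N t / D t := by positivity
    refine ⟨by simp only [g]; linarith, ?_⟩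
    have : g t - 2 * a = -(R * N t / D t) := by simp only [g]; ring
    rw [this, abs_neg, abs_of_pos hp]
    have hsq := Real.sq_sqrt (show 0 ≤ η * φ by positivity)
    have hq := Real.sqrt_nonneg (η * φ)
    have hst := hs t ht
    rcases le_total R (2 * a) with h | h
    · refine le_trans ?_ (mul_le_mul_of_nonneg_left (le_max_left _ _) (by norm_num))
      rw [div_le_iff₀ hd]
      simp only [N, D]
      nlinarith [mul_nonneg hst (show 0 ≤ 4 * a ^ 2 - R ^ 2 by nlinarith)]
    · have hND : N t ≤ D t := by
        have : Real.sinh (k * (T - t)) ≤ Real.cosh (k * (T - t)) := (Real.sinh_lt_cosh _).le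
        simp only [N, D]
        nlinarith [mul_nonneg (sub_nonneg.2 h) (sub_nonneg.2 this)]
      have h1 : R * N t / D t ≤ R := by
        rw [div_le_iff₀ hd]
        exact mul_le_mul_of_nonneg_left hND hR.le
      refine (h1.trans ?_).trans (mul_le_mul_of_nonneg_left (le_max_right _ _) (by norm_num))
      refine (sq_le_sq₀ hR.le (by positivity)).1 ?_
      nlinarith
  · rw [heq t ht, hdiff t ht]
    exact div_nonpos_of_nonpos_of_nonneg
      (mul_nonpos_of_nonpos_of_nonneg (by linarith) (hs t ht)) (hD t ht).le
  · rw [heq t ht, hdiff t ht]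
    exact div_nonneg (mul_nonneg (by linarith) (hs t ht)) (hD t ht).le
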